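/- For any r = t·M_w + k with 1 ≤ t ≤ n−1 and 0 < k ≤ M_w, the number of x ∈ 𝔽_q^N with w_{(P,w,π)}(x) = r is |A_r| = Σ_{i=0}^{t} Σ_{j=1}^{n} Σ_{I ∈ 𝓘_j^{j+i}} Σ_{(b_1,…,b_j) ∈ PRT_i[r] having exactly j parts} Σ_{(b_{m_1},…,b_{m_j}) ∈ ARG[(b_1,…,b_j)]} |D_{b_{m_1}}^{k_{i_1}}|⋯|D_{b_{m_j}}^{k_{i_j}}| · q^{k_{l_1}+k_{l_2}+⋯+k_{l_i}}, where for I ∈ 𝓘_j^{j+i} we write Max(I) = {i_1,…,i_j} and I ∖ Max(I) = {l_1,…,l_i}. -/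

import Mathlib

open scoped Classical

noncomputable section

variable {F : Type*} [Field F] [Fintype F]
variable {ι : Type*} [Fintype ι] [PartialOrder ι]

/-- The block weight induced by `w`: the maximum of the weights of the coordinates. -/
def blockWt (w : F → ℕ) {m : ℕ} (v : Fin m → F) : ℕ :=
  Finset.univ.sup fun t => w (v t)

/-- `M_w`, the maximum weight of an element of `F`. -/
def maxWt (w : F → ℕ) : ℕ := Finset.univ.sup w

/-- `D_r = {α ∈ F : w(α) = r}`. -/
def Dset (w : F → ℕ) (r : ℕ) : Finset F := Finset.univ.filter fun a => w a = r

/-- `D_r^k = {v ∈ F^k : w̃^k(v) = r}`. -/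
def Dk (w : F → ℕ) (m r : ℕ) : Finset (Fin m → F) :=
  Finset.univ.filter fun v => blockWt w v = r

/-- The order ideal (down-set) of the poset generated by a finite set `A`. -/
def genIdeal (A : Finset ι) : Finset ι := Finset.univ.filter fun i => ∃ j ∈ A, i ≤ j

/-- The set of maximal elements of a finite set `I`. -/
def maxElems (I : Finset ι) : Finset ι := I.filter fun i => ∀ j ∈ I, i ≤ j → j = i

/-- `I` is an order ideal (down-set) of the poset. -/
def IsIdeal (I : Finset ι) : Prop := ∀ a b : ι, a ≤ b → b ∈ I → a ∈ I

/-- The collection `𝓘_j^i` of ideals of cardinality `i` with exactly `j` maximal elements. -/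
def idealsWithMax (ι : Type*) [Fintype ι] [PartialOrder ι] (j i : ℕ) : Finset (Finset ι) :=
  Finset.univ.filter fun I => IsIdeal I ∧ I.card = i ∧ (maxElems I).card = j

/-- The π-support of a block vector. -/
def suppPi (k : ι → ℕ) (x : ∀ i, Fin (k i) → F) : Finset ι :=
  Finset.univ.filter fun i => x i ≠ 0

/-- The `(P,w,π)`-weight. -/
def wtP (w : F → ℕ) (k : ι → ℕ) (x : ∀ i, Fin (k i) → F) : ℕ :=
  ∑ i ∈ maxElems (genIdeal (suppPi k x)), blockWt w (x i)
    + maxWt w * ((genIdeal (suppPi k x)) \ maxElems (genIdeal (suppPi k x))).card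

/-- The `(P,w,π)`-distance. -/
def dP (w : F → ℕ) (k : ι → ℕ) (x y : ∀ i, Fin (k i) → F) : ℕ := wtP w k (x - y)

/-- A partition with `|M|` parts, each in `{1,…,R}`, together with an arrangement of its parts
on the set `M` (of maximal elements of an ideal), encoded as the function assigning to each
element of `M` the part placed there; the parts sum to `s` and the function vanishes off `M`. -/
def ARG (M : Finset ι) (R s : ℕ) : Finset (ι → Fin (R + 1)) :=
  Finset.univ.filter fun c =>
    (∀ i ∈ M, 1 ≤ (c i : ℕ)) ∧ (∀ i ∉ M, (c i : ℕ) = 0) ∧ ∑ i ∈ M, (c i : ℕ) = s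

theorem aux_blockWt_le (w : F → ℕ) {m : ℕ} (v : Fin m → F) : blockWt w v ≤ maxWt w :=
  Finset.sup_le fun t _ => Finset.le_sup (f := w) (Finset.mem_univ (v t))

theorem aux_blockWt_eq_zero (w : F → ℕ) (hw0 : ∀ a : F, w a = 0 ↔ a = 0) {m : ℕ}
    (v : Fin m → F) : blockWt w v = 0 ↔ v = 0 := by
  unfold blockWt
  rw [← bot_eq_zero, Finset.sup_eq_bot_iff]
  simp [hw0, funext_iff]

theorem aux_isIdeal_gen (A : Finset ι) : IsIdeal (genIdeal A) := by
  intro a b hab hb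
  simp only [genIdeal, Finset.mem_filter, Finset.mem_univ, true_and] at hb ⊢
  obtain ⟨j, hj, hbj⟩ := hb
  exact ⟨j, hj, hab.trans hbj⟩

theorem aux_subset_gen (A : Finset ι) : A ⊆ genIdeal A := by
  intro a ha
  simp only [genIdeal, Finset.mem_filter, Finset.mem_univ, true_and]
  exact ⟨a, ha, le_rfl⟩

theorem aux_max_gen_subset (A : Finset ι) : maxElems (genIdeal A) ⊆ A := by
  intro m hm
  rw [maxElems, Finset.mem_filter] at hm
  obtain ⟨h1, h2⟩ := hm
  have h3 := h1
  simp only [genIdeal, Finset.mem_filter, Finset.mem_univ, true_and] at h3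
  obtain ⟨j, hj, hmj⟩ := h3
  have := h2 j (aux_subset_gen A hj) hmj
  exact this ▸ hj

theorem aux_exists_max (I : Finset ι) {a : ι} (ha : a ∈ I) : ∃ m ∈ maxElems I, a ≤ m := by
  obtain ⟨m, ham, hm⟩ := I.exists_le_maximal ha
  refine ⟨m, ?_, ham⟩
  rw [maxElems, Finset.mem_filter]
  exact ⟨hm.prop, fun j hj hmj => le_antisymm (hm.le_of_ge hj hmj) hmj⟩

theorem aux_max_subset (I : Finset ι) : maxElems I ⊆ I := Finset.filter_subset _ _

theorem aux_gen_eq (A I : Finset ι) (hI : IsIdeal I) (h1 : A ⊆ I) (h2 : maxElems I ⊆ A) :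
    genIdeal A = I := by
  ext a
  simp only [genIdeal, Finset.mem_filter, Finset.mem_univ, true_and]
  constructor
  · rintro ⟨j, hj, haj⟩
    exact hI a j haj (h1 hj)
  · intro ha
    obtain ⟨m, hm, ham⟩ := aux_exists_max I ha
    exact ⟨m, h2 hm, ham⟩

/-- The arrangement attached to a vector. -/
def auxArr (w : F → ℕ) (k : ι → ℕ) (I : Finset ι) (x : ∀ i, Fin (k i) → F) :
    ι → Fin (maxWt w + 1) :=
  fun s => if s ∈ maxElems I then ⟨blockWt w (x s), Nat.lt_succ_of_le (aux_blockWt_le w _)⟩ else 0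

/-- The vectors with given ideal and arrangement. -/
def auxBox (w : F → ℕ) (k : ι → ℕ) (I : Finset ι) (c : ι → Fin (maxWt w + 1)) :
    Finset (∀ i, Fin (k i) → F) :=
  Fintype.piFinset fun l => if l ∈ maxElems I then Dk w (k l) (c l : ℕ)
    else if l ∈ I then Finset.univ else {0}

theorem aux_card_box (w : F → ℕ) (k : ι → ℕ) (I : Finset ι) (c : ι → Fin (maxWt w + 1)) :
    (auxBox w k I c).card = (∏ s ∈ maxElems I, (Dk w (k s) (c s : ℕ)).card) *
              Fintype.card F ^ (∑ l ∈ (I \ maxElems I), k l) := by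
  rw [auxBox, Fintype.card_piFinset, ← Finset.prod_pow_eq_pow_sum,
    ← Finset.prod_subset (Finset.subset_univ I), ← Finset.prod_sdiff (aux_max_subset I), mul_comm]
  · congr 1
    · refine Finset.prod_congr rfl fun s hs => ?_
      rw [if_pos hs]
    · refine Finset.prod_congr rfl fun s hs => ?_
      rw [Finset.mem_sdiff] at hs
      rw [if_neg hs.2, if_pos hs.1]
      simp
  · intro l _ hl
    rw [if_neg (fun h => hl (aux_max_subset I h)), if_neg hl]
    simp

theorem aux_mem_box (w : F → ℕ) (hw0 : ∀ a : F, w a = 0 ↔ a = 0) (k : ι → ℕ) (I : Finset ι)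
    (hI : IsIdeal I) (c : ι → Fin (maxWt w + 1)) (s : ℕ) (hc : c ∈ ARG (maxElems I) (maxWt w) s)
    (x : ∀ i, Fin (k i) → F) :
    x ∈ auxBox w k I c ↔ genIdeal (suppPi k x) = I ∧ auxArr w k I x = c := by
  simp only [ARG, Finset.mem_filter, Finset.mem_univ, true_and] at hc
  obtain ⟨hc1, hc2, -⟩ := hc
  rw [auxBox, Fintype.mem_piFinset]
  constructor
  · intro h
    have hM : ∀ l ∈ maxElems I, blockWt w (x l) = c l := by
      intro l hl
      have := h l
      rw [if_pos hl] at this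
      simpa [Dk] using this
    refine ⟨aux_gen_eq _ _ hI ?_ ?_, ?_⟩
    · intro l hl
      by_contra hlI
      have := h l
      rw [if_neg (fun h => hlI (aux_max_subset I h)), if_neg hlI, Finset.mem_singleton] at this
      simp [suppPi, this] at hl
    · intro l hl
      simp only [suppPi, Finset.mem_filter, Finset.mem_univ, true_and]
      intro h0
      have h1 := hc1 l hl
      rw [← hM l hl, (aux_blockWt_eq_zero w hw0 _).2 h0] at h1
      omega
    · funext l
      apply Fin.ext
      unfold auxArr
      split_ifs with hl
      · exact hM l hl
      · exact (hc2 l hl).symm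
  · rintro ⟨h1, h2⟩ l
    split_ifs with hl hl'
    · rw [← h2]
      simp [Dk, auxArr, hl]
    · exact Finset.mem_univ _
    · rw [Finset.mem_singleton]
      by_contra h0
      apply hl'
      rw [← h1]
      apply aux_subset_gen
      simpa [suppPi] using h0

theorem aux_gen_pos (w : F → ℕ) (k : ι → ℕ) (x : ∀ i, Fin (k i) → F) (hx : 0 < wtP w k x) :
    (maxElems (genIdeal (suppPi k x))).Nonempty := by
  rcases (genIdeal (suppPi k x)).eq_empty_or_nonempty with h | ⟨a, ha⟩
  · simp [wtP, h, maxElems] at hx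
  · obtain ⟨m, hm, -⟩ := aux_exists_max _ ha
    exact ⟨m, hm⟩

theorem aux_block_pos (w : F → ℕ) (hw0 : ∀ a : F, w a = 0 ↔ a = 0) (k : ι → ℕ)
    (x : ∀ i, Fin (k i) → F) (s : ι) (hs : s ∈ maxElems (genIdeal (suppPi k x))) :
    1 ≤ blockWt w (x s) := by
  have := aux_max_gen_subset _ hs
  simp only [suppPi, Finset.mem_filter, Finset.mem_univ, true_and] at this
  exact Nat.one_le_iff_ne_zero.2 fun h => this ((aux_blockWt_eq_zero w hw0 _).1 h)

/-- the number of vectors of `(P,w,π)`-weight `r = t·M_w + k₀` with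
`1 ≤ t ≤ n-1` and `0 < k₀ ≤ M_w`. -/
theorem stmt3 (w : F → ℕ) (hw0 : ∀ a : F, w a = 0 ↔ a = 0)
    (hwneg : ∀ a : F, w (-a) = w a) (hwadd : ∀ a b : F, w (a + b) ≤ w a + w b)
    (k : ι → ℕ) (t k₀ : ℕ) (ht1 : 1 ≤ t) (ht2 : t ≤ Fintype.card ι - 1)
    (hk1 : 0 < k₀) (hk2 : k₀ ≤ maxWt w) :
    (Finset.univ.filter fun x : ∀ i, Fin (k i) → F =>
        wtP w k x = t * maxWt w + k₀).card =
      ∑ i ∈ Finset.range (t + 1), ∑ j ∈ Finset.Icc 1 (Fintype.card ι),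
        ∑ I ∈ idealsWithMax ι j (j + i),
          ∑ c ∈ ARG (maxElems I) (maxWt w) (t * maxWt w + k₀ - i * maxWt w),
            (∏ s ∈ maxElems I, (Dk w (k s) (c s : ℕ)).card) *
              Fintype.card F ^ (∑ l ∈ (I \ maxElems I), k l) := by
  set R := maxWt w with hR
  rw [Finset.card_eq_sum_card_fiberwise (t := Finset.range (t + 1))
    (f := fun x => (genIdeal (suppPi k x) \ maxElems (genIdeal (suppPi k x))).card)]
  swap
  · intro x hx
    simp only [Finset.coe_filter, Finset.mem_univ, true_and, Set.mem_ofPred_eq] at hx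
    obtain ⟨m, hm⟩ := aux_gen_pos w k x (by omega)
    have h1 := aux_block_pos w hw0 k x m hm
    have h2 : blockWt w (x m) ≤ ∑ i ∈ maxElems (genIdeal (suppPi k x)), blockWt w (x i) :=
      Finset.single_le_sum (f := fun i => blockWt w (x i)) (fun _ _ => Nat.zero_le _) hm
    rw [wtP, ← hR] at hx
    rw [Finset.coe_range, Set.mem_Iio]
    apply Nat.lt_of_mul_lt_mul_left (a := R)
    beta_reduce
    rw [mul_add, mul_comm R t]
    omega
  refine Finset.sum_congr rfl fun i hi => ?_
  rw [Finset.card_eq_sum_card_fiberwise (t := Finset.Icc 1 (Fintype.card ι))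
    (f := fun x => (maxElems (genIdeal (suppPi k x))).card)]
  swap
  · intro x hx
    simp only [Finset.coe_filter, Finset.mem_filter, Finset.mem_univ, true_and,
      Set.mem_ofPred_eq] at hx
    rw [Finset.coe_Icc, Set.mem_Icc]
    exact ⟨Finset.card_pos.2 (aux_gen_pos w k x (by omega)), Finset.card_le_univ _⟩
  refine Finset.sum_congr rfl fun j hj => ?_
  rw [Finset.card_eq_sum_card_fiberwise (t := idealsWithMax ι j (j + i))
    (f := fun x => genIdeal (suppPi k x))]
  swap
  · intro x hx
    simp only [Finset.coe_filter, Finset.mem_filter, Finset.mem_univ, true_and,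
      Set.mem_ofPred_eq] at hx
    simp only [idealsWithMax, Finset.coe_filter, Finset.mem_univ, true_and, Set.mem_ofPred_eq]
    refine ⟨aux_isIdeal_gen _, ?_, hx.2⟩
    have := Finset.card_sdiff_add_card_eq_card (aux_max_subset (genIdeal (suppPi k x)))
    omega
  refine Finset.sum_congr rfl fun I hI => ?_
  simp only [idealsWithMax, Finset.mem_filter, Finset.mem_univ, true_and] at hI
  obtain ⟨hI, hIc, hIm⟩ := hI
  have hIs := Finset.card_sdiff_add_card_eq_card (aux_max_subset I)
  have hIi : (I \ maxElems I).card = i := by omega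
  have hle : i * R ≤ t * R := Nat.mul_le_mul_right _ (by
    rw [Finset.mem_range] at hi
    omega)
  rw [Finset.card_eq_sum_card_fiberwise (t := ARG (maxElems I) R (t * R + k₀ - i * R))
    (f := fun x => auxArr w k I x)]
  swap
  · intro x hx
    simp only [Finset.coe_filter, Finset.mem_filter, Finset.mem_univ, true_and,
      Set.mem_ofPred_eq] at hx
    obtain ⟨⟨⟨hx1, -⟩, -⟩, hx2⟩ := hx
    simp only [ARG, Finset.coe_filter, Finset.mem_univ, true_and, Set.mem_ofPred_eq]
    refine ⟨fun s hs => ?_, fun s hs => ?_, ?_⟩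
    · have := aux_block_pos w hw0 k x s (by rw [hx2]; exact hs)
      simpa [auxArr, hs] using this
    · simp [auxArr, hs]
    · rw [wtP, hx2, hIi, ← hR, mul_comm R i] at hx1
      have : ∑ s ∈ maxElems I, (auxArr w k I x s : ℕ) = ∑ s ∈ maxElems I, blockWt w (x s) :=
        Finset.sum_congr rfl fun s hs => by simp [auxArr, hs]
      rw [this]
      omega
  refine Finset.sum_congr rfl fun c hc => ?_
  rw [← aux_card_box]
  congr 1
  ext x
  rw [aux_mem_box w hw0 k I hI c _ hc]
  simp only [Finset.mem_filter, Finset.mem_univ, true_and]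
  constructor
  · rintro ⟨⟨-, h1⟩, h2⟩
    exact ⟨h1, h2⟩
  · rintro ⟨h1, h2⟩
    refine ⟨⟨⟨⟨?_, ?_⟩, ?_⟩, h1⟩, h2⟩
    · rw [wtP, h1, hIi, ← hR, mul_comm R i]
      have : ∑ s ∈ maxElems I, (c s : ℕ) = ∑ s ∈ maxElems I, blockWt w (x s) :=
        Finset.sum_congr rfl fun s hs => by rw [← h2]; simp [auxArr, hs]
      rw [← this]
      simp only [ARG, Finset.mem_filter, Finset.mem_univ, true_and] at hc
      rw [hc.2.2]
      omega
    · rw [h1]; exact hIi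
    · rw [h1]; exact hIm
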